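/- arXiv:2604.28015 — 3 statements merged into one kernel-verified Lean document; each statement's English description precedes it below -/
import Mathlib

section
/- Let G be a group, let E be a field of characteristic p, and let n be a positive integer with p > n. If ρ₁, ρ₂ : G → GL_n(E) are semisimple representations such that tr(ρ₁(g)) = tr(ρ₂(g)) for all g ∈ G, then ρ₁ and ρ₂ are isomorphic representations. -/
/-!
Compare finite-dimensional semisimple modules `M` and `N` over an algebra `A` with equal trace
functions. If there is a nonzero map `M → N`, then its image is a direct summand of both modules;
cancel it and argue by induction on the dimension. If there is none, the Jacobson density theorem
gives an element of `A` acting as the identity on `M` and as zero on `N`, whose traces are `dim M`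
and `0`. As the factorial of `dim M` is invertible in the base field, `M = 0`, and likewise `N = 0`.
-/

open Module Representation
open scoped Nat MonoidAlgebra

section Semisimple

variable {A M N : Type*} [Ring A] [AddCommGroup M] [Module A M] [AddCommGroup N] [Module A N]
  [IsSemisimpleModule A M]

theorem isSemisimpleModule_prod [IsSemisimpleModule A N] : IsSemisimpleModule A (M × N) := by
  have h := IsSemisimpleModule.sup (IsSemisimpleModule.range (LinearMap.inl A M N))
    (IsSemisimpleModule.range (LinearMap.inr A M N))
  rw [LinearMap.sup_range_inl_inr] at h
  exact .congr Submodule.topEquiv.symm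

theorem nonempty_ker_prod_range_equiv (f : M →ₗ[A] N) :
    Nonempty ((LinearMap.ker f × LinearMap.range f) ≃ₗ[A] M) := by
  obtain ⟨C, hC⟩ := exists_isCompl (LinearMap.ker f)
  let e : LinearMap.range f ≃ₗ[A] C :=
    f.quotKerEquivRange.symm ≪≫ₗ Submodule.quotientEquivOfIsCompl _ _ hC
  exact ⟨(LinearEquiv.refl A _).prodCongr e ≪≫ₗ Submodule.prodEquivOfIsCompl _ _ hC⟩

theorem subsingleton_linearMap_symm [IsSemisimpleModule A N] [Subsingleton (M →ₗ[A] N)] :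
    Subsingleton (N →ₗ[A] M) := by
  refine subsingleton_of_forall_eq 0 fun f ↦ ?_
  obtain ⟨s, hs⟩ := IsSemisimpleModule.lifting_property f.rangeRestrict
    f.surjective_rangeRestrict LinearMap.id
  obtain ⟨t, ht⟩ := IsSemisimpleModule.extension_property (LinearMap.range f).subtype
    (LinearMap.range f).injective_subtype s
  have s_eq_zero : s = 0 := by rw [← ht, Subsingleton.elim t 0, LinearMap.zero_comp]
  ext x
  simpa [s_eq_zero] using congr(($hs (f.rangeRestrict x) : M)).symm

end Semisimple

theorem moduleEnd_prod_apply_fst_zero {A M N : Type*} [Semiring A] [AddCommMonoid M] [Module A M]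
    [AddCommMonoid N] [Module A N] [Subsingleton (M →ₗ[A] N)] [Subsingleton (N →ₗ[A] M)]
    (f : End A (M × N)) (z : M × N) : f (z.1, 0) = ((f z).1, 0) := by
  have snd_inl (x : M) : (f (x, 0)).2 = 0 :=
    congr($(Subsingleton.elim (LinearMap.snd A M N ∘ₗ f ∘ₗ LinearMap.inl A M N) 0) x)
  have fst_inr (y : N) : (f (0, y)).1 = 0 :=
    congr($(Subsingleton.elim (LinearMap.fst A M N ∘ₗ f ∘ₗ LinearMap.inr A M N) 0) y)
  have apply_eq_add : f z = f (z.1, 0) + f (0, z.2) := by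
    rw [← map_add, Prod.mk_add_mk, add_zero, zero_add]
  ext
  · simp only [apply_eq_add, Prod.fst_add, fst_inr, add_zero]
  · exact snd_inl z.1

theorem exists_smul_eq_self_and_smul_eq_zero (E A M N : Type*) [CommRing E] [Ring A] [Algebra E A]
    [AddCommGroup M] [Module E M] [Module A M] [IsScalarTower E A M] [Module.Finite E M]
    [AddCommGroup N] [Module E N] [Module A N] [IsScalarTower E A N] [Module.Finite E N]
    [IsSemisimpleModule A M] [IsSemisimpleModule A N] [Subsingleton (M →ₗ[A] N)] :
    ∃ a : A, (∀ x : M, a • x = x) ∧ ∀ y : N, a • y = 0 := by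
  have : Subsingleton (N →ₗ[A] M) := subsingleton_linearMap_symm
  have : IsSemisimpleModule A (M × N) := isSemisimpleModule_prod
  have : Module.Finite (End A (M × N)) (M × N) := .of_restrictScalars_finite E _ _
  let proj : End (End A (M × N)) (M × N) :=
    { toFun z := (z.1, 0)
      map_add' z w := by simp
      map_smul' f z := (moduleEnd_prod_apply_fst_zero f z).symm }
  obtain ⟨a, ha⟩ := Module.Finite.toModuleEnd_moduleEnd_surjective proj
  exact ⟨a, fun x ↦ congr(($ha (x, 0)).1), fun y ↦ congr(($ha (0, y)).2)⟩

section Character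

variable (E A M N : Type*) [CommRing E] [Ring A] [Algebra E A]
  [AddCommGroup M] [Module E M] [Module A M] [IsScalarTower E A M]
  [AddCommGroup N] [Module E N] [Module A N] [IsScalarTower E A N]

/-- The character of a module `M` over an `E`-algebra `A`: the `E`-linear functional sending `a` to
the trace of the action of `a` on the `E`-module `M`. -/
noncomputable def moduleCharacter : A →ₗ[E] E :=
  LinearMap.trace E M ∘ₗ (Algebra.lsmul E E M).toLinearMap

variable {E A M N}

theorem moduleCharacter_apply (a : A) :
    moduleCharacter E A M a = LinearMap.trace E M (Algebra.lsmul E E M a) := rfl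

theorem moduleCharacter_congr (e : M ≃ₗ[A] N) :
    moduleCharacter E A M = moduleCharacter E A N := by
  ext a
  have lsmul_conj :
      (e.restrictScalars E).conj (Algebra.lsmul E E M a) = Algebra.lsmul E E N a := by
    ext x
    simp [LinearEquiv.conj_apply]
  rw [moduleCharacter_apply, moduleCharacter_apply, ← lsmul_conj, LinearMap.trace_conj']

theorem moduleCharacter_prod [Module.Free E M] [Module.Finite E M] [Module.Free E N]
    [Module.Finite E N] :
    moduleCharacter E A (M × N) = moduleCharacter E A M + moduleCharacter E A N := by
  ext a
  exact LinearMap.trace_prodMap' (Algebra.lsmul E E M a) (Algebra.lsmul E E N a)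

theorem moduleCharacter_apply_eq_finrank [Module.Free E M] [Module.Finite E M] {a : A}
    (ha : ∀ x : M, a • x = x) : moduleCharacter E A M a = finrank E M := by
  have lsmul_eq_one : Algebra.lsmul E E M a = 1 := LinearMap.ext ha
  rw [moduleCharacter_apply, lsmul_eq_one, LinearMap.trace_one]

theorem moduleCharacter_apply_eq_zero {a : A} (ha : ∀ x : M, a • x = 0) :
    moduleCharacter E A M a = 0 := by
  have lsmul_eq_zero : Algebra.lsmul E E M a = 0 := LinearMap.ext ha
  rw [moduleCharacter_apply, lsmul_eq_zero, map_zero]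

end Character

instance finite_submodule_of_isScalarTower {E A M : Type*} [Semiring E] [Semiring A] [SMul E A]
    [AddCommMonoid M] [Module E M] [Module A M] [IsScalarTower E A M] [IsNoetherian E M]
    (K : Submodule A M) : Module.Finite E K :=
  .of_injective (K.subtype.restrictScalars E) K.injective_subtype

theorem eq_zero_of_natCast_eq_zero_of_isUnit_factorial {R : Type*} [Semiring R] [Nontrivial R]
    {n : ℕ} (hn : IsUnit (n ! : R)) (h : (n : R) = 0) : n = 0 := by
  cases n with
  | zero => rfl
  | succ n => simp [Nat.factorial_succ, Nat.cast_mul, h] at hn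

theorem isUnit_natCast_factorial_of_lt_charP {R : Type*} [Ring R] [NoZeroDivisors R] [Nontrivial R]
    (p : ℕ) [CharP R p] {n : ℕ} (hn : n < p) : IsUnit (n ! : R) := by
  have : Fact p.Prime := ⟨CharP.char_prime_of_ne_zero R hn.ne_bot⟩
  exact (IsUnit.natCast_factorial_iff_of_charP p).mpr hn

section Field

variable {E A M N : Type*} [Field E] [Ring A] [Algebra E A]
  [AddCommGroup M] [Module E M] [Module A M] [IsScalarTower E A M] [Module.Finite E M]
  [AddCommGroup N] [Module E N] [Module A N] [IsScalarTower E A N] [Module.Finite E N]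

theorem subsingleton_of_moduleCharacter_eq [IsSemisimpleModule A M] [IsSemisimpleModule A N]
    [Subsingleton (M →ₗ[A] N)] (hM : IsUnit ((finrank E M)! : E))
    (h : moduleCharacter E A M = moduleCharacter E A N) : Subsingleton M := by
  obtain ⟨a, smul_eq_self, smul_eq_zero⟩ := exists_smul_eq_self_and_smul_eq_zero E A M N
  have finrank_cast_eq_zero : (finrank E M : E) = 0 := by
    rw [← moduleCharacter_apply_eq_finrank smul_eq_self, h,
      moduleCharacter_apply_eq_zero smul_eq_zero]
  exact finrank_zero_iff.mp
    (eq_zero_of_natCast_eq_zero_of_isUnit_factorial hM finrank_cast_eq_zero)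

theorem nonempty_linearEquiv_of_moduleCharacter_eq [IsSemisimpleModule A M]
    [IsSemisimpleModule A N] (hM : IsUnit ((finrank E M)! : E)) (hN : IsUnit ((finrank E N)! : E))
    (h : moduleCharacter E A M = moduleCharacter E A N) : Nonempty (M ≃ₗ[A] N) := by
  induction hd : finrank E M using Nat.strong_induction_on generalizing M N with | _ d ih
  obtain _ | _ := subsingleton_or_nontrivial (M →ₗ[A] N)
  · have : Subsingleton (N →ₗ[A] M) := subsingleton_linearMap_symm
    have : Subsingleton M := subsingleton_of_moduleCharacter_eq hM h
    have : Subsingleton N := subsingleton_of_moduleCharacter_eq hN h.symm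
    exact ⟨0⟩
  obtain ⟨f, hf⟩ := exists_ne (0 : M →ₗ[A] N)
  obtain ⟨eM⟩ := nonempty_ker_prod_range_equiv f
  obtain ⟨D, hD⟩ := exists_isCompl (LinearMap.range f)
  let eN := Submodule.prodEquivOfIsCompl D (LinearMap.range f) hD.symm
  have ker_lt : finrank E (LinearMap.ker f) < finrank E M :=
    Submodule.finrank_lt (s := (LinearMap.ker f).restrictScalars E)
      (by simpa [LinearMap.ker_eq_top] using hf)
  have D_le : finrank E D ≤ finrank E N := Submodule.finrank_le (D.restrictScalars E)
  have h_summand : moduleCharacter E A (LinearMap.ker f) = moduleCharacter E A D := by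
    rw [← moduleCharacter_congr eM, ← moduleCharacter_congr eN, moduleCharacter_prod,
      moduleCharacter_prod] at h
    exact add_right_cancel h
  obtain ⟨g⟩ := ih _ (hd ▸ ker_lt) (hM.natCast_factorial_of_le ker_lt.le)
    (hN.natCast_factorial_of_le D_le) h_summand rfl
  exact ⟨eM.symm ≪≫ₗ g.prodCongr (.refl A _) ≪≫ₗ eN⟩

end Field

section Representation

variable {k G V W : Type*} [Field k] [Monoid G] [AddCommGroup V] [Module k V] [AddCommGroup W]
  [Module k W] {ρ : Representation k G V} {σ : Representation k G W}

theorem moduleCharacter_asModule_of (ρ : Representation k G V) (g : G) :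
    moduleCharacter k k[G] ρ.asModule (MonoidAlgebra.of k G g) = ρ.character g := by
  have lsmul_conj :
      ρ.asModuleEquiv.conj (Algebra.lsmul k k ρ.asModule (MonoidAlgebra.of k G g)) = ρ g := by
    ext x
    rw [LinearEquiv.conj_apply_apply, Algebra.lsmul_coe, asModuleEquiv_map_smul, asAlgebraHom_of,
      LinearEquiv.apply_symm_apply]
  rw [moduleCharacter_apply, ← LinearMap.trace_conj' _ ρ.asModuleEquiv, lsmul_conj, character]

theorem moduleCharacter_asModule_eq (h : ρ.character = σ.character) :
    moduleCharacter k k[G] ρ.asModule = moduleCharacter k k[G] σ.asModule := by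
  ext g
  calc
    moduleCharacter k k[G] ρ.asModule (MonoidAlgebra.of k G g) = ρ.character g :=
      moduleCharacter_asModule_of ρ g
    _ = σ.character g := congrFun h g
    _ = moduleCharacter k k[G] σ.asModule (MonoidAlgebra.of k G g) :=
      (moduleCharacter_asModule_of σ g).symm

theorem nonempty_equiv_of_asModule_linearEquiv (e : ρ.asModule ≃ₗ[k[G]] σ.asModule) :
    Nonempty (ρ.Equiv σ) := by
  refine ⟨.mk (ρ.asModuleEquiv.symm ≪≫ₗ e.restrictScalars k ≪≫ₗ σ.asModuleEquiv) fun g ↦ ?_⟩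
  ext x
  change σ.asModuleEquiv (e (ρ.asModuleEquiv.symm (ρ g x))) =
    σ g (σ.asModuleEquiv (e (ρ.asModuleEquiv.symm x)))
  rw [asModuleEquiv_symm_map_rho, map_smul, asModuleEquiv_map_smul, asAlgebraHom_of]

theorem stmt_0_general [FiniteDimensional k V] [FiniteDimensional k W]
    (hV : IsUnit ((finrank k V)! : k)) (hW : IsUnit ((finrank k W)! : k))
    (hρ : IsSemisimpleModule k[G] ρ.asModule) (hσ : IsSemisimpleModule k[G] σ.asModule)
    (h : ρ.character = σ.character) : Nonempty (ρ.Equiv σ) := by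
  rw [← ρ.asModuleEquiv.finrank_eq] at hV
  rw [← σ.asModuleEquiv.finrank_eq] at hW
  obtain ⟨e⟩ :=
    nonempty_linearEquiv_of_moduleCharacter_eq hV hW (moduleCharacter_asModule_eq h)
  exact nonempty_equiv_of_asModule_linearEquiv e

end Representation

/-- **Positive-characteristic Brauer–Nesbitt (Proposition 2.4).**
Let `G` be a group, `E` a field of characteristic `p`, and `n` a positive integer with
`p > n`. If `ρ₁, ρ₂ : G → GL_n(E)` are semisimple representations (i.e. the corresponding
`E[G]`-module `Eⁿ` is semisimple) with `tr (ρ₁ g) = tr (ρ₂ g)` for all `g ∈ G`,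
then `ρ₁` and `ρ₂` are isomorphic, i.e. there is a `G`-equivariant `E`-linear isomorphism. -/
theorem stmt_0 {G E : Type*} [Group G] [Field E] (p n : ℕ) [CharP E p]
    (hn : 0 < n) (hpn : n < p)
    (ρ₁ ρ₂ : Representation E G (Fin n → E))
    (hss₁ : IsSemisimpleModule (MonoidAlgebra E G) ρ₁.asModule)
    (hss₂ : IsSemisimpleModule (MonoidAlgebra E G) ρ₂.asModule)
    (htr : ∀ g : G, LinearMap.trace E (Fin n → E) (ρ₁ g) =
      LinearMap.trace E (Fin n → E) (ρ₂ g)) :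
    ∃ f : (Fin n → E) ≃ₗ[E] (Fin n → E), ∀ (g : G) (x : Fin n → E),
      f (ρ₁ g x) = ρ₂ g (f x) := by
  have hunit : IsUnit ((finrank E (Fin n → E))! : E) := by
    simpa only [finrank_fin_fun] using isUnit_natCast_factorial_of_lt_charP p hpn
  obtain ⟨f⟩ := stmt_0_general hunit hunit hss₁ hss₂ (funext htr)
  exact ⟨f.toLinearEquiv, f.isIntertwining⟩
end

section
/- Let G be a group, H a normal subgroup of G, E a field, and V a nonzero finite-dimensional E-vector space. Let ρ₁, ρ₂ : G → GL(V) be representations such that: (a) every E-linear endomorphism of V that commutes with ρ₁(h) for all h ∈ H is multiplication by a scalar in E; and (b) there is an E-linear automorphism Φ of V with Φ ∘ ρ₁(h) = ρ₂(h) ∘ Φ for all h ∈ H. Then there exists a group homomorphism χ : G → Eˣ with χ(h) = 1 for all h ∈ H, such that Φ ∘ ρ₁(g) = χ(g) • (ρ₂(g) ∘ Φ) for all g ∈ G. In particular, either ρ₁ ≅ ρ₂ (when χ is trivial) or ρ₁ ≅ ρ₂ ⊗ χ for a nontrivial character χ factoring through G/H. -/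
/-!
Transporting `ρ₂` along `Φ` gives a homomorphism `τ = Φ⁻¹ ρ₂ Φ` that agrees with `σ = ρ₁` on the
normal subgroup `H`. Conjugation by `σ g` and by `τ g` has the same effect on `σ(g⁻¹ H g) = σ(H)`,
so `σ g / τ g` centralizes `σ(H)` and is therefore a scalar `χ g` by (a); since scalars are central,
`χ` is multiplicative.
-/

section Group

variable {G Γ C : Type*} [Group G] [Group Γ] [Group C] {σ τ : G →* Γ} {ι : C →* Γ}

theorem div_mem_centralizer_of_eqOn_normal {H : Subgroup G} [H.Normal]
    (hστ : Set.EqOn σ τ H) (g : G) : σ g / τ g ∈ Subgroup.centralizer (σ '' H) := by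
  rintro _ ⟨h, hh, rfl⟩
  have conj_eq : (σ g)⁻¹ * σ h * σ g = (τ g)⁻¹ * σ h * τ g := by
    have hconj := hστ (‹H.Normal›.conj_mem' h hh g)
    simpa only [map_mul, map_inv, ← hστ hh] using hconj
  calc σ h * (σ g / τ g) = σ g * ((σ g)⁻¹ * σ h * σ g) * (τ g)⁻¹ := by
        rw [div_eq_mul_inv]; group
    _ = σ g / τ g * σ h := by rw [conj_eq, div_eq_mul_inv]; group

theorem exists_monoidHom_eq_mul_of_div_mem_range (hι : Function.Injective ι)
    (hcentral : ι.range ≤ Subgroup.center Γ) (hdiv : ∀ g, σ g / τ g ∈ ι.range) :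
    ∃ χ : G →* C, ∀ g, σ g = ι (χ g) * τ g := by
  choose χ hχ using hdiv
  have commutes (c : C) (x : Γ) : x * ι c = ι c * x :=
    Subgroup.mem_center_iff.mp (hcentral ⟨c, rfl⟩) x
  refine ⟨MonoidHom.mk' χ fun a b ↦ hι ?_, fun g ↦ by simp [hχ]⟩
  calc ι (χ (a * b)) = σ a * (σ b / τ b) * (τ a)⁻¹ := by
        simp only [hχ, map_mul, div_eq_mul_inv]; group
    _ = ι (χ b) * (σ a / τ a) := by rw [← hχ b, commutes, mul_assoc, div_eq_mul_inv]
    _ = ι (χ a * χ b) := by rw [← hχ a, map_mul, commutes]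

theorem exists_monoidHom_eq_mul_of_eqOn_normal {H : Subgroup G} [H.Normal]
    (hι : Function.Injective ι) (hcentral : ι.range ≤ Subgroup.center Γ)
    (hσ : Subgroup.centralizer (σ '' H) ≤ ι.range) (hστ : Set.EqOn σ τ H) :
    ∃ χ : G →* C, (∀ h ∈ H, χ h = 1) ∧ ∀ g, σ g = ι (χ g) * τ g := by
  obtain ⟨χ, hχ⟩ := exists_monoidHom_eq_mul_of_div_mem_range hι hcentral
    fun g ↦ hσ (div_mem_centralizer_of_eqOn_normal hστ g)
  refine ⟨χ, fun h hh ↦ hι ?_, hχ⟩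
  rw [map_one, ← mul_eq_right (b := τ h), ← hχ, hστ hh]

end Group

section Algebra

variable {R A : Type*} [CommSemiring R] [Semiring A] [Algebra R A]

theorem range_unitsMap_algebraMap_le_center :
    (Units.map (algebraMap R A : R →* A)).range ≤ Subgroup.center Aˣ := by
  rintro _ ⟨c, rfl⟩
  exact Subgroup.mem_center_iff.mpr fun u ↦ Units.ext (Algebra.commutes (c : R) (u : A)).symm

theorem mem_range_unitsMap_algebraMap_of_mem_bot [FaithfulSMul R A] {u : Aˣ}
    (hu : (u : A) ∈ (⊥ : Subalgebra R A)) (hu' : (↑u⁻¹ : A) ∈ (⊥ : Subalgebra R A)) :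
    u ∈ (Units.map (algebraMap R A : R →* A)).range := by
  obtain ⟨c, hc⟩ := Algebra.mem_bot.mp hu
  obtain ⟨d, hd⟩ := Algebra.mem_bot.mp hu'
  have hcd : c * d = 1 := FaithfulSMul.algebraMap_injective R A <| by
    rw [map_mul, hc, hd, u.mul_inv, map_one]
  exact ⟨Units.mkOfMulEqOne c d hcd, Units.ext hc⟩

theorem centralizer_le_range_unitsMap_algebraMap [FaithfulSMul R A] {S : Set Aˣ}
    (hS : Subalgebra.centralizer R (Units.val '' S) = ⊥) :
    Subgroup.centralizer S ≤ (Units.map (algebraMap R A : R →* A)).range := by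
  have val_mem_bot {u : Aˣ} (hu : u ∈ Subgroup.centralizer S) :
      (u : A) ∈ (⊥ : Subalgebra R A) := by
    rw [← hS]
    rintro _ ⟨s, hs, rfl⟩
    exact congrArg Units.val (hu s hs)
  exact fun u hu ↦
    mem_range_unitsMap_algebraMap_of_mem_bot (val_mem_bot hu) (val_mem_bot (inv_mem hu))

theorem stmt_2_general [FaithfulSMul R A] {G : Type*} [Group G] (H : Subgroup G) [H.Normal]
    (ρ₁ ρ₂ : G →* Aˣ) (hρ₁ : Subalgebra.centralizer R (Units.val '' (ρ₁ '' H)) = ⊥)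
    (P : Aˣ) (hP : ∀ h ∈ H, P * ρ₁ h = ρ₂ h * P) :
    ∃ χ : G →* Rˣ, (∀ h ∈ H, χ h = 1) ∧
      ∀ g, (P * ρ₁ g : A) = (χ g : R) • (ρ₂ g * P : A) := by
  let τ : G →* Aˣ := (MulAut.conj P⁻¹).toMonoidHom.comp ρ₂
  have τ_apply (g : G) : τ g = P⁻¹ * ρ₂ g * P := by simp [τ]
  have agree : Set.EqOn ρ₁ τ H := fun h hh ↦ by
    rw [τ_apply, mul_assoc, ← hP h hh, inv_mul_cancel_left]
  obtain ⟨χ, hχH, hχ⟩ := exists_monoidHom_eq_mul_of_eqOn_normal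
    (Units.map_injective (FaithfulSMul.algebraMap_injective R A))
    range_unitsMap_algebraMap_le_center (centralizer_le_range_unitsMap_algebraMap hρ₁) agree
  refine ⟨χ, hχH, fun g ↦ ?_⟩
  have hχg : (ρ₁ g : A) = (χ g : R) • (↑P⁻¹ * ρ₂ g * P : A) := by
    simp [hχ, τ_apply, Algebra.smul_def]
  rw [hχg, mul_smul_comm, mul_assoc, Units.mul_inv_cancel_left]

end Algebra

/-- **Lemma 3.2 (sharpened form).**
Let `G` be a group, `H ⊴ G` a normal subgroup, `E` a field, `V` a nonzero
finite-dimensional `E`-vector space, and `ρ₁, ρ₂ : G → GL(V)`. Assume: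
(a) every `E`-endomorphism of `V` commuting with `ρ₁(h)` for all `h ∈ H` is a scalar; and
(b) there is an `E`-linear automorphism `Φ` of `V` with `Φ ∘ ρ₁(h) = ρ₂(h) ∘ Φ` for `h ∈ H`.
Then there is a character `χ : G → Eˣ`, trivial on `H`, with
`Φ ∘ ρ₁(g) = χ(g) • (ρ₂(g) ∘ Φ)` for all `g ∈ G`. -/
theorem stmt_2 {G E V : Type*} [Group G] [Field E]
    [AddCommGroup V] [Module E V] [Nontrivial V] [FiniteDimensional E V]
    (H : Subgroup G) [H.Normal]
    (ρ₁ ρ₂ : G →* (V →ₗ[E] V)ˣ)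
    (ha : ∀ f : V →ₗ[E] V,
      (∀ h ∈ H, f ∘ₗ (ρ₁ h : V →ₗ[E] V) = (ρ₁ h : V →ₗ[E] V) ∘ₗ f) →
        ∃ c : E, f = c • (LinearMap.id : V →ₗ[E] V))
    (Φ : V ≃ₗ[E] V)
    (hb : ∀ h ∈ H, (Φ : V →ₗ[E] V) ∘ₗ (ρ₁ h : V →ₗ[E] V) =
      (ρ₂ h : V →ₗ[E] V) ∘ₗ (Φ : V →ₗ[E] V)) :
    ∃ χ : G →* Eˣ, (∀ h ∈ H, χ h = 1) ∧
      ∀ g : G, (Φ : V →ₗ[E] V) ∘ₗ (ρ₁ g : V →ₗ[E] V) =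
        (χ g : E) • ((ρ₂ g : V →ₗ[E] V) ∘ₗ (Φ : V →ₗ[E] V)) := by
  refine stmt_2_general H ρ₁ ρ₂ (eq_bot_iff.mpr fun f hf ↦ ?_)
    (LinearMap.GeneralLinearGroup.ofLinearEquiv Φ) fun h hh ↦ Units.ext (hb h hh)
  exact (ha f fun h hh ↦ (hf _ ⟨_, ⟨h, hh, rfl⟩, rfl⟩).symm).imp fun _ hc ↦ hc.symm
end

section
/- Let G be a group, E a field, and V₁, V₂ finite-dimensional E-vector spaces. Let ρ₁ : G → GL(V₁) and ρ₂ : G → GL(V₂) be representations with tr(ρ₁(g)) = tr(ρ₂(g)) for all g ∈ G. Let A₂ denote the E-linear span of ρ₂(G) inside End_E(V₂), and assume that the trace bilinear form (x, y) ↦ tr(x ∘ y) restricted to A₂ is nondegenerate. Then for any finite family of scalars c_i ∈ E and elements g_i ∈ G, the relation Σ_i c_i ρ₁(g_i) = 0 in End_E(V₁) implies Σ_i c_i ρ₂(g_i) = 0 in End_E(V₂). -/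
/-!
Both `A₁` and `A₂` are images of the group algebra `E[G]`, and equality of the characters says that
the trace functionals of `End V₁` and `End V₂` agree when pulled back to `E[G]`. If `a ∈ E[G]` acts
as zero on `V₁`, then so does every product `a * b`; hence `tr (a * b) = 0` on `V₂` too, i.e. the
image of `a` in `A₂` lies in the radical of the trace form, which is zero by nondegeneracy.
-/

section

variable {R N A₁ A₂ : Type*} [CommSemiring R] [AddCommMonoid N] [Module R N]
  [Semiring A₁] [Algebra R A₁] [Semiring A₂] [Algebra R A₂]

theorem ker_le_ker_of_nondegenerate_range {B : Type*} [Semiring B] [Algebra R B]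
    (f₁ : B →ₐ[R] A₁) (f₂ : B →ₐ[R] A₂) (τ₁ : A₁ →ₗ[R] N) (τ₂ : A₂ →ₗ[R] N)
    (hτ : τ₁ ∘ₗ f₁.toLinearMap = τ₂ ∘ₗ f₂.toLinearMap)
    (hnd : ∀ x ∈ f₂.range, (∀ y ∈ f₂.range, τ₂ (x * y) = 0) → x = 0) :
    RingHom.ker f₁ ≤ RingHom.ker f₂ := by
  intro a (ha : f₁ a = 0)
  refine hnd (f₂ a) ⟨a, rfl⟩ ?_
  rintro _ ⟨b, rfl⟩
  calc τ₂ (f₂ a * f₂ b) = τ₂ (f₂ (a * b)) := by rw [map_mul f₂]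
    _ = τ₁ (f₁ (a * b)) := (LinearMap.congr_fun hτ (a * b)).symm
    _ = 0 := by rw [map_mul f₁, ha, zero_mul, map_zero]

variable {A G : Type*} [Semiring A] [Algebra R A] [Monoid G]

theorem toSubmodule_range_monoidAlgebra_lift (φ : G →* A) :
    Subalgebra.toSubmodule (MonoidAlgebra.lift R A G φ).range =
      Submodule.span R (Set.range φ) := by
  apply le_antisymm
  · rintro _ ⟨a, rfl⟩
    change MonoidAlgebra.lift R A G φ a ∈ _
    rw [MonoidAlgebra.lift_apply]
    exact Submodule.sum_mem _ fun g _ ↦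
      Submodule.smul_mem _ _ (Submodule.subset_span ⟨g, rfl⟩)
  · rw [Submodule.span_le]
    rintro _ ⟨g, rfl⟩
    exact ⟨MonoidAlgebra.of R G g, MonoidAlgebra.lift_of φ g⟩

theorem monoidAlgebra_lift_sum_single {ι : Type*} (φ : G →* A) (s : Finset ι) (c : ι → R)
    (g : ι → G) :
    MonoidAlgebra.lift R A G φ (∑ i ∈ s, MonoidAlgebra.single (g i) (c i)) =
      ∑ i ∈ s, c i • φ (g i) := by
  simp only [map_sum, MonoidAlgebra.lift_single]

theorem stmt_7_general (φ₁ : G →* A₁) (φ₂ : G →* A₂) (τ₁ : A₁ →ₗ[R] N) (τ₂ : A₂ →ₗ[R] N)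
    (hτ : ∀ g, τ₁ (φ₁ g) = τ₂ (φ₂ g))
    (hnd : ∀ x ∈ Submodule.span R (Set.range φ₂),
      (∀ y ∈ Submodule.span R (Set.range φ₂), τ₂ (x * y) = 0) → x = 0)
    {ι : Type*} (s : Finset ι) (c : ι → R) (g : ι → G) (h₀ : ∑ i ∈ s, c i • φ₁ (g i) = 0) :
    ∑ i ∈ s, c i • φ₂ (g i) = 0 := by
  have hτ_lift : τ₁ ∘ₗ (MonoidAlgebra.lift R A₁ G φ₁).toLinearMap =
      τ₂ ∘ₗ (MonoidAlgebra.lift R A₂ G φ₂).toLinearMap := by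
    ext g
    simpa using hτ g
  rw [← toSubmodule_range_monoidAlgebra_lift] at hnd
  rw [← monoidAlgebra_lift_sum_single] at h₀ ⊢
  exact ker_le_ker_of_nondegenerate_range _ _ τ₁ τ₂ hτ_lift hnd h₀

end

/-- **Well-definedness of `Φ` (proof of Proposition 3.3).**
Let `ρ₁, ρ₂` be representations of a group `G` on finite-dimensional `E`-vector spaces
with `tr (ρ₁ g) = tr (ρ₂ g)` for all `g ∈ G`. Let `A₂` be the `E`-linear span of
`ρ₂(G)` in `End_E(V₂)` and assume the trace form `(x, y) ↦ tr (x ∘ y)` is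
nondegenerate on `A₂`. Then `∑ cᵢ ρ₁(gᵢ) = 0` implies `∑ cᵢ ρ₂(gᵢ) = 0`. -/
theorem stmt_7 {G E : Type*} [Group G] [Field E]
    {V₁ V₂ : Type*} [AddCommGroup V₁] [Module E V₁] [AddCommGroup V₂] [Module E V₂]
    [FiniteDimensional E V₁] [FiniteDimensional E V₂]
    (ρ₁ : Representation E G V₁) (ρ₂ : Representation E G V₂)
    (htr : ∀ g : G, LinearMap.trace E V₁ (ρ₁ g) = LinearMap.trace E V₂ (ρ₂ g))
    (hnd : ∀ x ∈ Submodule.span E (Set.range fun g : G => (ρ₂ g : V₂ →ₗ[E] V₂)),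
      (∀ y ∈ Submodule.span E (Set.range fun g : G => (ρ₂ g : V₂ →ₗ[E] V₂)),
        LinearMap.trace E V₂ (x ∘ₗ y) = 0) → x = 0)
    (ι : Type*) [Fintype ι] (c : ι → E) (g : ι → G)
    (h0 : ∑ i : ι, c i • (ρ₁ (g i) : V₁ →ₗ[E] V₁) = 0) :
    ∑ i : ι, c i • (ρ₂ (g i) : V₂ →ₗ[E] V₂) = 0 :=
  stmt_7_general ρ₁ ρ₂ (LinearMap.trace E V₁) (LinearMap.trace E V₂) htr hnd Finset.univ c g h0
end
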